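/- Assume 0 < η_i < 1/‖A_i‖² for i = 1, …, p and that the x₀-minimal norm solution x† satisfies the source condition x† − x₀ = A^* λ† for some λ† = (λ_1†, …, λ_p†) ∈ Y. Then for all integers n ≥ 0 there holds E[‖x_n^δ − x†‖²] ≤ 2 p M₀ / (c₀ (n+1)) + 2 η̄ n δ² / (c₀ p), where M₀ := ‖x₀ − x†‖² + c₀ Σ_{i=1}^p (1/η_i) ‖λ_i†‖². -/

import Mathlib

/-- Expectation with respect to the first `m` i.i.d. uniformly distributed indices:
for a quantity `f` determined by the coordinates `i_0, …, i_{m-1}` of the sample path,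
`avg p hp m f = p^{-m} ∑_{(i_0,…,i_{m-1}) ∈ {1,…,p}^m} f`. -/
noncomputable def avg (p : ℕ) (hp : 0 < p) (m : ℕ) (f : (ℕ → Fin p) → ℝ) : ℝ :=
  (∑ σ : Fin m → Fin p, f (fun k => if h : k < m then σ ⟨k, h⟩ else ⟨0, hp⟩)) / (p : ℝ) ^ m

/-!
By linearity of the recursion, the error `xδ n - x†` splits into the iteration with exact data `0`
started at `x₀ - x† = A* (-λ†)` and the iteration with data `yδ - y` started at `0`.

An iteration started at `A* λ` is a running mean: `(n + 1) x n = n x (n - 1) + A* (λ n)`, where the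
dual variable `λ n` changes only in the coordinate `i n`, by `-η i (A i (x n) - b i)`. This makes
`‖A* (λ n)‖² + n 𝔼 j, η j ‖A j (x (n - 1)) - b j‖²` a supermartingale up to a drift. For `b = 0` the
drift is at most `-c₀ 𝔼 i, η i ‖A i (x n)‖²`, which compensates `c₀` times the growth of
`∑ j, ‖λ n j‖² / η j + (n / p) ‖x (n - 1)‖²`; the last summand yields the rate `1 / n`.
For the noise part the drift is at most `𝔼 i, η i ‖b i‖² / c₀`, and convexity of the squared norm
carries the resulting bound for `A* (λ n)` over to the running means.
-/

section Probability

open Finset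
open scoped BigOperators

variable {p : ℕ} (hp : 0 < p)

lemma avg_eq_expect (m : ℕ) (f : (ℕ → Fin p) → ℝ) :
    avg p hp m f =
      𝔼 σ : Fin m → Fin p, f (fun k => if h : k < m then σ ⟨k, h⟩ else ⟨0, hp⟩) := by
  simp [avg, Fintype.expect_eq_sum_div_card]

lemma avg_mono (m : ℕ) {f g : (ℕ → Fin p) → ℝ} (h : ∀ ω, f ω ≤ g ω) :
    avg p hp m f ≤ avg p hp m g := by
  simp only [avg_eq_expect]
  exact expect_le_expect fun _ _ => h _

lemma avg_add (m : ℕ) (f g : (ℕ → Fin p) → ℝ) :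
    avg p hp m (fun ω => f ω + g ω) = avg p hp m f + avg p hp m g := by
  simp only [avg_eq_expect, expect_add_distrib]

lemma avg_const_mul (m : ℕ) (c : ℝ) (f : (ℕ → Fin p) → ℝ) :
    avg p hp m (fun ω => c * f ω) = c * avg p hp m f := by
  simp only [avg_eq_expect, mul_expect]

lemma avg_const (m : ℕ) (c : ℝ) : avg p hp m (fun _ => c) = c := by
  have : Nonempty (Fin p) := ⟨⟨0, hp⟩⟩
  rw [avg_eq_expect, Fintype.expect_const]

lemma avg_succ (m : ℕ) (f : (ℕ → Fin p) → ℝ) :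
    avg p hp (m + 1) f = avg p hp m (fun ω => 𝔼 i, f (Function.update ω m i)) := by
  have snoc_path (σ : Fin m → Fin p) (i : Fin p) :
      (fun k => if h : k < m + 1 then Fin.snocEquiv (fun _ => Fin p) (i, σ) ⟨k, h⟩ else ⟨0, hp⟩) =
        Function.update (fun k => if h : k < m then σ ⟨k, h⟩ else ⟨0, hp⟩) m i := by
    funext k
    rcases lt_trichotomy k m with hk | rfl | hk
    · simp [Fin.snocEquiv, Fin.snoc, hk, hk.ne, Nat.lt_succ_of_lt hk]
    · simp [Fin.snocEquiv, Fin.snoc]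
    · simp [hk.ne', hk.not_gt, show ¬k < m + 1 by lia]
  simp only [avg_eq_expect, ← snoc_path]
  rw [expect_comm, ← expect_product' univ univ, univ_product_univ]
  exact (Fintype.expect_equiv (Fin.snocEquiv fun _ => Fin p) _ _ fun _ => rfl).symm

lemma avg_norm_add_sq_le {E : Type*} [SeminormedAddCommGroup E] (m : ℕ)
    (f g : (ℕ → Fin p) → E) :
    avg p hp m (fun ω => ‖f ω + g ω‖ ^ 2) ≤
      2 * (avg p hp m (fun ω => ‖f ω‖ ^ 2) + avg p hp m (fun ω => ‖g ω‖ ^ 2)) := by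
  rw [← avg_add, ← avg_const_mul]
  refine avg_mono hp m fun ω => ?_
  calc ‖f ω + g ω‖ ^ 2 ≤ (‖f ω‖ + ‖g ω‖) ^ 2 := by gcongr; exact norm_add_le _ _
    _ ≤ 2 * (‖f ω‖ ^ 2 + ‖g ω‖ ^ 2) := add_sq_le

/-- The orbit of `s₀` under the random maps `T n (ω n)`, along the path of indices `ω`. -/
def randomOrbit {ι S : Type*} (T : ℕ → ι → S → S) (s₀ : S) (ω : ℕ → ι) : ℕ → S
  | 0 => s₀
  | n + 1 => T n (ω n) (randomOrbit T s₀ ω n)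

lemma randomOrbit_update {ι S : Type*} (T : ℕ → ι → S → S) (s₀ : S) (ω : ℕ → ι) (i : ι)
    {k n : ℕ} (hk : k ≤ n) :
    randomOrbit T s₀ (Function.update ω n i) k = randomOrbit T s₀ ω k := by
  induction k with
  | zero => rfl
  | succ k ih =>
    simp only [randomOrbit, ih (Nat.le_of_succ_le hk), Function.update_of_ne (by lia : k ≠ n)]

variable {S : Type*} (T : ℕ → Fin p → S → S) (s₀ : S)

lemma avg_randomOrbit_succ (f : S → ℝ) (n : ℕ) :
    avg p hp (n + 1) (fun ω => f (randomOrbit T s₀ ω (n + 1))) =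
      avg p hp n (fun ω => 𝔼 i, f (T n i (randomOrbit T s₀ ω n))) := by
  simp only [avg_succ, randomOrbit, Function.update_self, randomOrbit_update T s₀ _ _ le_rfl]

lemma avg_randomOrbit_le_of_expect_le (V : ℕ → S → ℝ) (C : ℝ)
    (hV : ∀ n ω, 𝔼 i, V (n + 1) (T n i (randomOrbit T s₀ ω n)) ≤ V n (randomOrbit T s₀ ω n) + C)
    (n : ℕ) :
    avg p hp n (fun ω => V n (randomOrbit T s₀ ω n)) ≤ V 0 s₀ + n * C := by
  induction n with
  | zero => simp [randomOrbit, avg_const]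
  | succ n ih =>
    calc avg p hp (n + 1) (fun ω => V (n + 1) (randomOrbit T s₀ ω (n + 1)))
        = avg p hp n (fun ω => 𝔼 i, V (n + 1) (T n i (randomOrbit T s₀ ω n))) :=
          avg_randomOrbit_succ hp T s₀ (V (n + 1)) n
      _ ≤ avg p hp n (fun ω => V n (randomOrbit T s₀ ω n) + C) := avg_mono hp n (hV n)
      _ = avg p hp n (fun ω => V n (randomOrbit T s₀ ω n)) + C := by rw [avg_add, avg_const]
      _ ≤ V 0 s₀ + (n + 1 : ℕ) * C := by push_cast; linarith

end Probability

section Inequalities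

open Finset
open scoped BigOperators InnerProductSpace

lemma extrapolation_le_two_mul_inner {E : Type*} [SeminormedAddCommGroup E]
    [InnerProductSpace ℝ E] {t : ℝ} (ht : 0 ≤ t) (a a' ν : E) :
    (t + 1) * ‖a - ν‖ ^ 2 - t * ‖a' - ν‖ ^ 2 + (‖a‖ ^ 2 - ‖ν‖ ^ 2) ≤
      2 * ⟪(t + 1) • a - t • a', a - ν⟫_ℝ := by
  have hsplit : (t + 1) • a - t • a' = t • ((a - ν) - (a' - ν)) + a := by module
  have hdiff : ‖a - ν‖ ^ 2 - ‖a' - ν‖ ^ 2 ≤ 2 * ⟪(a - ν) - (a' - ν), a - ν⟫_ℝ := by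
    rw [inner_sub_left, real_inner_self_eq_norm_sq]
    linarith [norm_sub_sq_real (a' - ν) (a - ν), sq_nonneg ‖(a' - ν) - (a - ν)‖]
  have hpolar : 2 * ⟪a, a - ν⟫_ℝ = ‖a - ν‖ ^ 2 + ‖a‖ ^ 2 - ‖ν‖ ^ 2 := by
    rw [inner_sub_right, real_inner_self_eq_norm_sq, norm_sub_sq_real]
    ring
  rw [hsplit, inner_add_left, real_inner_smul_left]
  linear_combination t * hdiff - hpolar

lemma norm_sub_smul_adjoint_sq_le {E F : Type*} [NormedAddCommGroup E] [InnerProductSpace ℝ E]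
    [CompleteSpace E] [NormedAddCommGroup F] [InnerProductSpace ℝ F] [CompleteSpace F]
    (T : E →L[ℝ] F) (η : ℝ) (u : E) (r : F) :
    ‖u - η • T.adjoint r‖ ^ 2 ≤ ‖u‖ ^ 2 - 2 * η * ⟪T u, r⟫_ℝ + η ^ 2 * (‖T‖ ^ 2 * ‖r‖ ^ 2) := by
  have hadj : ‖T.adjoint r‖ ≤ ‖T‖ * ‖r‖ := by
    simpa only [LinearIsometryEquiv.norm_map] using T.adjoint.le_opNorm r
  calc ‖u - η • T.adjoint r‖ ^ 2
      = ‖u‖ ^ 2 - 2 * η * ⟪T u, r⟫_ℝ + η ^ 2 * ‖T.adjoint r‖ ^ 2 := by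
        rw [norm_sub_sq_real, inner_smul_right, ContinuousLinearMap.adjoint_inner_right,
          norm_smul, mul_pow, Real.norm_eq_abs, sq_abs]
        ring
    _ ≤ _ := by rw [← mul_pow ‖T‖]; gcongr

lemma norm_sq_sub_add_mul_le {E : Type*} [SeminormedAddCommGroup E] (a ν : E) {h : ℝ}
    (h0 : 0 ≤ h) (h1 : h < 1) :
    ‖ν‖ ^ 2 - ‖a‖ ^ 2 + h * ‖a - ν‖ ^ 2 ≤ ‖ν‖ ^ 2 / (1 - h) := by
  calc ‖ν‖ ^ 2 - ‖a‖ ^ 2 + h * ‖a - ν‖ ^ 2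
      ≤ ‖ν‖ ^ 2 - ‖a‖ ^ 2 + h * (‖a‖ + ‖ν‖) ^ 2 := by gcongr; exact norm_sub_le _ _
    _ ≤ ‖ν‖ ^ 2 / (1 - h) := by
        rw [le_div_iff₀ (by linarith)]
        nlinarith [sq_nonneg ((1 - h) * ‖a‖ - h * ‖ν‖)]

lemma norm_sq_le_of_add_one_smul_eq {E : Type*} [SeminormedAddCommGroup E] [NormedSpace ℝ E]
    {t : ℝ} (ht : 0 ≤ t) {x u v : E} (hx : (t + 1) • x = u + t • v) :
    (t + 1) * ‖x‖ ^ 2 ≤ ‖u‖ ^ 2 + t * ‖v‖ ^ 2 := by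
  have hnorm : (t + 1) * ‖x‖ ≤ ‖u‖ + t * ‖v‖ := by
    simpa only [← hx, norm_smul, Real.norm_of_nonneg ht,
      Real.norm_of_nonneg (add_nonneg ht zero_le_one)] using norm_add_le u (t • v)
  have hsq : ((t + 1) * ‖x‖) ^ 2 ≤ (‖u‖ + t * ‖v‖) ^ 2 := by gcongr
  have hconv : (‖u‖ + t * ‖v‖) ^ 2 ≤ (t + 1) * (‖u‖ ^ 2 + t * ‖v‖ ^ 2) := by
    linear_combination t * sq_nonneg (‖u‖ - ‖v‖)
  refine le_of_mul_le_mul_left ?_ (by linarith : 0 < t + 1)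
  linarith

lemma one_sub_mul_sq_pos {η a : ℝ} (hη : 0 < η) (h : η < 1 / a ^ 2) : 0 < 1 - η * a ^ 2 := by
  have ha : 0 < a ^ 2 := one_div_pos.1 (hη.trans h)
  linarith [(lt_div_iff₀ ha).1 h]

lemma expect_mul_sq_le {ι : Type*} [Fintype ι] {w a δ : ι → ℝ} {wmax : ℝ} (hw : ∀ i, 0 ≤ w i)
    (hwmax : ∀ i, w i ≤ wmax) (ha : ∀ i, 0 ≤ a i) (haδ : ∀ i, a i ≤ δ i) :
    𝔼 i, w i * a i ^ 2 ≤ wmax * (∑ i, δ i ^ 2) / Fintype.card ι := by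
  rw [Fintype.expect_eq_sum_div_card, mul_sum]
  gcongr with i
  · exact (hw i).trans (hwmax i)
  · exact hwmax i
  · exact ha i
  · exact haδ i

end Inequalities

section State

open Finset

/-- The state of the heavy ball iteration in its dual form: the dual variable, the current iterate
and the previous iterate. -/
structure HeavyBallState {ι : Type*} (X : Type*) (Y : ι → Type*) where
  dual : ∀ i, Y i
  point : X
  prev : X

variable {ι X : Type*} {Y : ι → Type*} [Fintype ι] [NormedAddCommGroup X]
  [∀ i, NormedAddCommGroup (Y i)] {η : ι → ℝ}

variable (η) in
/-- The part `∑ j, ‖λ j‖² / η j + (n / p) ‖x'‖²` of the Lyapunov function, for `p` operators, the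
dual variable `λ` and the previous iterate `x'`. -/
noncomputable def HeavyBallState.dualEnergy (n : ℕ) (s : HeavyBallState X Y) : ℝ :=
  ∑ j, (η j)⁻¹ * ‖s.dual j‖ ^ 2 + n / Fintype.card ι * ‖s.prev‖ ^ 2

lemma HeavyBallState.sq_norm_prev_le_dualEnergy (hη : ∀ i, 0 ≤ η i) (n : ℕ)
    (s : HeavyBallState X Y) :
    n / Fintype.card ι * ‖s.prev‖ ^ 2 ≤ dualEnergy η n s :=
  le_add_of_nonneg_left <|
    sum_nonneg fun i _ => mul_nonneg (inv_nonneg.2 (hη i)) (sq_nonneg _)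

end State

section HeavyBall

open Finset
open scoped BigOperators InnerProductSpace

variable {ι X : Type*} {Y : ι → Type*}
  [NormedAddCommGroup X] [InnerProductSpace ℝ X] [CompleteSpace X]
  [∀ i, NormedAddCommGroup (Y i)] [∀ i, InnerProductSpace ℝ (Y i)] [∀ i, CompleteSpace (Y i)]
  (A : ∀ i, X →L[ℝ] Y i) (η : ι → ℝ) (b : ∀ i, Y i)

/-- The sequence `x` obeys the heavy ball recursion for the system `A i x = b i` along the path of
indices `ω`. At `n = 0` the momentum vanishes, as truncated subtraction gives `x (0 - 1) = x 0`. -/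
def IsHeavyBall (ω : ℕ → ι) (x : ℕ → X) : Prop :=
  ∀ n : ℕ, x (n + 1) = x n
    - (((n : ℝ) + 2)⁻¹ * η (ω n)) • (A (ω n)).adjoint (A (ω n) (x n) - b (ω n))
    + ((n : ℝ) / ((n : ℝ) + 2)) • (x n - x (n - 1))

variable {A η b}

lemma IsHeavyBall.sub {b' : ∀ i, Y i} {ω : ℕ → ι} {x x' : ℕ → X} (hx : IsHeavyBall A η b ω x)
    (hx' : IsHeavyBall A η b' ω x') :
    IsHeavyBall A η (fun i => b i - b' i) ω (fun n => x n - x' n) := by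
  intro n
  simp only [hx n, hx' n, map_sub]
  module

lemma isHeavyBall_const (z : X) (ω : ℕ → ι) :
    IsHeavyBall A η (fun i => A i z) ω (fun _ => z) := by
  intro n
  simp

lemma IsHeavyBall.unique {ω : ℕ → ι} {x x' : ℕ → X} (hx : IsHeavyBall A η b ω x)
    (hx' : IsHeavyBall A η b ω x') (h0 : x 0 = x' 0) (n : ℕ) : x n = x' n := by
  induction n using Nat.strong_induction_on with
  | _ n ih =>
    cases n with
    | zero => exact h0
    | succ n => rw [hx n, hx' n, ih n (by lia), ih (n - 1) (by lia)]

variable [Fintype ι] [DecidableEq ι]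

variable (A η b)

/-- The adjoint `λ ↦ ∑ i, (A i)* (λ i)` of the stacked operator `x ↦ (A i x)ᵢ`. -/
noncomputable def adjointSum : (∀ i, Y i) →ₗ[ℝ] X :=
  LinearMap.lsum ℝ Y ℝ fun i => (A i).adjoint.toLinearMap

lemma adjointSum_apply (lam : ∀ i, Y i) :
    adjointSum A lam = ∑ i, (A i).adjoint (lam i) := by
  simp [adjointSum, LinearMap.lsum_apply]

lemma adjointSum_single (i : ι) (v : Y i) :
    adjointSum A (Pi.single i v) = (A i).adjoint v :=
  LinearMap.lsum_piSingle ..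

namespace HeavyBallState

/-- The initial state of the iteration started at `A* lam`. -/
noncomputable def init (lam : ∀ i, Y i) : HeavyBallState X Y :=
  ⟨lam, adjointSum A lam, adjointSum A lam⟩

/-- The `n`-th step of the heavy ball iteration, with index `i`: the dual variable descends along
the `i`-th residual, and the new iterate is the running mean of the images of the dual variables. -/
noncomputable def step (n : ℕ) (i : ι) (s : HeavyBallState X Y) : HeavyBallState X Y where
  dual := s.dual - η i • Pi.single i (A i s.point - b i)
  point := ((n : ℝ) + 2)⁻¹ •
    (adjointSum A (s.dual - η i • Pi.single i (A i s.point - b i)) + ((n : ℝ) + 1) • s.point)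
  prev := s.point

/-- The random heavy ball iteration started at `A* lam`. -/
noncomputable abbrev orbit (lam : ∀ i, Y i) (ω : ℕ → ι) (n : ℕ) : HeavyBallState X Y :=
  randomOrbit (step A η b) (init A lam) ω n

/-- The part `‖A* λ‖² + n 𝔼 j, η j ‖A j x' - b j‖²` of the Lyapunov function, for the dual
variable `λ` and the previous iterate `x'`. -/
noncomputable def primalEnergy (n : ℕ) (s : HeavyBallState X Y) : ℝ :=
  ‖adjointSum A s.dual‖ ^ 2 + n * 𝔼 j, η j * ‖A j s.prev - b j‖ ^ 2

lemma adjointSum_dual_step (n : ℕ) (i : ι) (s : HeavyBallState X Y) :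
    adjointSum A (step A η b n i s).dual =
      adjointSum A s.dual - η i • (A i).adjoint (A i s.point - b i) := by
  simp only [step, map_sub, map_smul, adjointSum_single]

section Orbit

variable (lam : ∀ i, Y i) (ω : ℕ → ι)

lemma prev_orbit (n : ℕ) : (orbit A η b lam ω n).prev = (orbit A η b lam ω (n - 1)).point := by
  cases n <;> rfl

lemma adjointSum_dual_orbit (n : ℕ) :
    adjointSum A (orbit A η b lam ω n).dual =
      ((n : ℝ) + 1) • (orbit A η b lam ω n).point - (n : ℝ) • (orbit A η b lam ω n).prev := by
  cases n with
  | zero => simp [randomOrbit, init]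
  | succ n =>
    have hn : ((n + 1 : ℕ) : ℝ) + 1 = n + 2 := by push_cast; ring
    simp only [randomOrbit, step, hn, smul_inv_smul₀ (by positivity : (n : ℝ) + 2 ≠ 0)]
    push_cast
    abel

lemma isHeavyBall_point_orbit : IsHeavyBall A η b ω (fun n => (orbit A η b lam ω n).point) := by
  intro n
  have hpoint : (orbit A η b lam ω (n + 1)).point = ((n : ℝ) + 2)⁻¹ •
      (adjointSum A (orbit A η b lam ω (n + 1)).dual
        + ((n : ℝ) + 1) • (orbit A η b lam ω n).point) := rfl
  have hdual : adjointSum A (orbit A η b lam ω (n + 1)).dual =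
      adjointSum A (orbit A η b lam ω n).dual - η (ω n) •
        (A (ω n)).adjoint (A (ω n) (orbit A η b lam ω n).point - b (ω n)) :=
    adjointSum_dual_step A η b n (ω n) _
  beta_reduce
  rw [hpoint, hdual, adjointSum_dual_orbit, prev_orbit]
  match_scalars <;> field_simp
  ring

end Orbit

section Energy

variable {A η}

lemma norm_adjointSum_dual_step_sq_add_le {n : ℕ} {s : HeavyBallState X Y}
    (hs : adjointSum A s.dual = ((n : ℝ) + 1) • s.point - (n : ℝ) • s.prev) {i : ι}
    (hη : 0 ≤ η i) :
    ‖adjointSum A (step A η b n i s).dual‖ ^ 2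
        + ((n : ℝ) + 1) * (η i * ‖A i s.point - b i‖ ^ 2) ≤
      ‖adjointSum A s.dual‖ ^ 2 + n * (η i * ‖A i s.prev - b i‖ ^ 2)
        + η i * (‖b i‖ ^ 2 - ‖A i s.point‖ ^ 2
          + η i * ‖A i‖ ^ 2 * ‖A i s.point - b i‖ ^ 2) := by
  have hgrad := norm_sub_smul_adjoint_sq_le (A i) (η i) (adjointSum A s.dual) (A i s.point - b i)
  have hinner := mul_le_mul_of_nonneg_left (extrapolation_le_two_mul_inner
    (n.cast_nonneg (α := ℝ)) (A i s.point) (A i s.prev) (b i)) hη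
  have hmap : A i (adjointSum A s.dual) =
      ((n : ℝ) + 1) • A i s.point - (n : ℝ) • A i s.prev := by
    simp only [hs, map_sub, map_smul]
  rw [← hmap] at hinner
  rw [adjointSum_dual_step]
  linear_combination hgrad + hinner

lemma expect_primalEnergy_step_le [Nonempty ι] {n : ℕ} {s : HeavyBallState X Y}
    (hs : adjointSum A s.dual = ((n : ℝ) + 1) • s.point - (n : ℝ) • s.prev)
    (hη : ∀ i, 0 ≤ η i) :
    𝔼 i, primalEnergy A η b (n + 1) (step A η b n i s) ≤
      primalEnergy A η b n s + 𝔼 i, η i * (‖b i‖ ^ 2 - ‖A i s.point‖ ^ 2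
        + η i * ‖A i‖ ^ 2 * ‖A i s.point - b i‖ ^ 2) := by
  have hmean := expect_le_expect fun i (_ : i ∈ univ) =>
    norm_adjointSum_dual_step_sq_add_le b hs (hη i)
  simp only [expect_add_distrib, Fintype.expect_const, ← mul_expect] at hmean
  have hprev (i : ι) : (step A η b n i s).prev = s.point := rfl
  simp only [primalEnergy, expect_add_distrib, hprev, Fintype.expect_const, Nat.cast_succ]
  exact hmean

lemma sum_norm_sq_dual_step {n : ℕ} (s : HeavyBallState X Y) {i : ι} (hη : η i ≠ 0) :
    ∑ j, (η j)⁻¹ * ‖(step A η b n i s).dual j‖ ^ 2 =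
      ∑ j, (η j)⁻¹ * ‖s.dual j‖ ^ 2 - 2 * ⟪s.dual i, A i s.point - b i⟫_ℝ
        + η i * ‖A i s.point - b i‖ ^ 2 := by
  set r := A i s.point - b i with hr
  have hcoord (j : ι) : (η j)⁻¹ * ‖(step A η b n i s).dual j‖ ^ 2 = (η j)⁻¹ * ‖s.dual j‖ ^ 2
      + if j = i then -2 * ⟪s.dual i, r⟫_ℝ + η i * ‖r‖ ^ 2 else 0 := by
    rcases eq_or_ne j i with rfl | hj
    · simp only [step, ← hr, Pi.sub_apply, Pi.smul_apply, Pi.single_eq_same, if_true]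
      rw [norm_sub_sq_real, inner_smul_right, norm_smul, mul_pow, Real.norm_eq_abs, sq_abs]
      field_simp
      ring
    · simp [step, hj]
  simp only [hcoord, sum_add_distrib, sum_ite_eq', mem_univ, if_true]
  ring

lemma sum_inner_dual_eq (s : HeavyBallState X Y) (x : X) :
    ∑ i, ⟪s.dual i, A i x⟫_ℝ = ⟪adjointSum A s.dual, x⟫_ℝ := by
  simp only [adjointSum_apply, sum_inner, ContinuousLinearMap.adjoint_inner_left]

lemma expect_dualEnergy_step_le [Nonempty ι] {n : ℕ} {s : HeavyBallState X Y}
    (hs : adjointSum A s.dual = ((n : ℝ) + 1) • s.point - (n : ℝ) • s.prev)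
    (hη : ∀ i, η i ≠ 0) :
    𝔼 i, dualEnergy η (n + 1) (step A η 0 n i s) ≤
      dualEnergy η n s + 𝔼 i, η i * ‖A i s.point‖ ^ 2 := by
  have hcard : (0 : ℝ) < Fintype.card ι := by exact_mod_cast Fintype.card_pos
  have hinner : 𝔼 i, ⟪s.dual i, A i s.point⟫_ℝ =
      ⟪adjointSum A s.dual, s.point⟫_ℝ / Fintype.card ι := by
    rw [Fintype.expect_eq_sum_div_card, sum_inner_dual_eq]
  have hextra : ((n : ℝ) + 1) * ‖s.point‖ ^ 2 - n * ‖s.prev‖ ^ 2 ≤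
      2 * ⟪adjointSum A s.dual, s.point⟫_ℝ := by
    have h := extrapolation_le_two_mul_inner n.cast_nonneg s.point s.prev (0 : X)
    simp only [sub_zero, norm_zero, ← hs] at h
    linarith [sq_nonneg ‖s.point‖]
  have hprev (i : ι) : (step A η 0 n i s).prev = s.point := rfl
  simp only [dualEnergy, sum_norm_sq_dual_step 0 s (hη _), hprev, Pi.zero_apply, sub_zero,
    expect_add_distrib, expect_sub_distrib, Fintype.expect_const, ← mul_expect, hinner]
  have hscaled := div_le_div_of_nonneg_right hextra hcard.le
  push_cast
  linear_combination hscaled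

variable {c : ℝ}

lemma expect_energy_step_le_of_exact [Nonempty ι] {n : ℕ} {s : HeavyBallState X Y}
    (hs : adjointSum A s.dual = ((n : ℝ) + 1) • s.point - (n : ℝ) • s.prev)
    (hη : ∀ i, 0 < η i) (hc : 0 ≤ c) (hcη : ∀ i, c ≤ 1 - η i * ‖A i‖ ^ 2) :
    𝔼 i, (primalEnergy A η 0 (n + 1) (step A η 0 n i s)
        + c * dualEnergy η (n + 1) (step A η 0 n i s)) ≤
      primalEnergy A η 0 n s + c * dualEnergy η n s := by
  have hprimal := expect_primalEnergy_step_le 0 hs fun i => (hη i).le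
  have hdual := mul_le_mul_of_nonneg_left (expect_dualEnergy_step_le hs fun i => (hη i).ne') hc
  have hdrift : 𝔼 i, η i * (‖(0 : ∀ i, Y i) i‖ ^ 2 - ‖A i s.point‖ ^ 2
      + η i * ‖A i‖ ^ 2 * ‖A i s.point - (0 : ∀ i, Y i) i‖ ^ 2) ≤
        -(c * 𝔼 i, η i * ‖A i s.point‖ ^ 2) := by
    rw [mul_expect, ← expect_neg_distrib]
    refine expect_le_expect fun i _ => ?_
    simp only [Pi.zero_apply, norm_zero, sub_zero]
    linear_combination mul_le_mul_of_nonneg_right (hcη i)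
      (mul_nonneg (hη i).le (sq_nonneg ‖A i s.point‖))
  rw [expect_add_distrib, ← mul_expect]
  linarith

lemma expect_primalEnergy_step_le_of_noise [Nonempty ι] {n : ℕ} {s : HeavyBallState X Y}
    (hs : adjointSum A s.dual = ((n : ℝ) + 1) • s.point - (n : ℝ) • s.prev)
    (hη : ∀ i, 0 ≤ η i) (hc : 0 < c) (hcη : ∀ i, c ≤ 1 - η i * ‖A i‖ ^ 2) :
    𝔼 i, primalEnergy A η b (n + 1) (step A η b n i s) ≤
      primalEnergy A η b n s + (𝔼 i, η i * ‖b i‖ ^ 2) / c := by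
  refine (expect_primalEnergy_step_le b hs hη).trans ?_
  rw [expect_div]
  gcongr with i
  have hdrift := norm_sq_sub_add_mul_le (A i s.point) (b i)
    (mul_nonneg (hη i) (sq_nonneg ‖A i‖)) (by linarith [hcη i])
  calc η i * (‖b i‖ ^ 2 - ‖A i s.point‖ ^ 2 + η i * ‖A i‖ ^ 2 * ‖A i s.point - b i‖ ^ 2)
      ≤ η i * (‖b i‖ ^ 2 / c) := by
        refine mul_le_mul_of_nonneg_left (hdrift.trans ?_) (hη i)
        gcongr
        exact hcη i
    _ = η i * ‖b i‖ ^ 2 / c := by ring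

lemma sq_norm_adjointSum_dual_le_primalEnergy (hη : ∀ i, 0 ≤ η i) (n : ℕ)
    (s : HeavyBallState X Y) : ‖adjointSum A s.dual‖ ^ 2 ≤ primalEnergy A η b n s :=
  le_add_of_nonneg_right <| mul_nonneg n.cast_nonneg <|
    expect_nonneg fun i _ => mul_nonneg (hη i) (sq_nonneg _)

end Energy

end HeavyBallState

open HeavyBallState in
lemma IsHeavyBall.sub_eq_point_orbit_add {A : ∀ i, X →L[ℝ] Y i} {η : ι → ℝ} {b : ∀ i, Y i}
    {ω : ℕ → ι} {x : ℕ → X} (hx : IsHeavyBall A η b ω x) {z : X} {lam : ∀ i, Y i}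
    (h0 : x 0 - z = adjointSum A lam) (n : ℕ) :
    x n - z =
      (orbit A η 0 lam ω n).point + (orbit A η (fun i => b i - A i z) 0 ω n).point := by
  have hnoise := (hx.sub (isHeavyBall_const z ω)).sub (isHeavyBall_point_orbit A η 0 lam ω)
  simp only [Pi.zero_apply, sub_zero] at hnoise
  rw [← sub_eq_iff_eq_add']
  refine hnoise.unique (isHeavyBall_point_orbit A η _ 0 ω) ?_ n
  simp [randomOrbit, init, h0]

end HeavyBall

section Convergence

open Finset HeavyBallState
open scoped BigOperators

variable {p : ℕ} (hp : 0 < p) {X : Type*} {Y : Fin p → Type*}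
  [NormedAddCommGroup X] [InnerProductSpace ℝ X] [CompleteSpace X]
  [∀ i, NormedAddCommGroup (Y i)] [∀ i, InnerProductSpace ℝ (Y i)] [∀ i, CompleteSpace (Y i)]
  {A : ∀ i, X →L[ℝ] Y i} {η : Fin p → ℝ} {c : ℝ}

lemma avg_norm_sq_prev_orbit_succ (b lam : ∀ i, Y i) (n : ℕ) :
    avg p hp (n + 1) (fun ω => ‖(orbit A η b lam ω (n + 1)).prev‖ ^ 2) =
      avg p hp n (fun ω => ‖(orbit A η b lam ω n).point‖ ^ 2) := by
  have : Nonempty (Fin p) := ⟨⟨0, hp⟩⟩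
  rw [avg_randomOrbit_succ hp (step A η b) (init A lam) (fun s => ‖s.prev‖ ^ 2)]
  simp only [step, Fintype.expect_const]

theorem avg_norm_sq_orbit_le_of_exact (hη : ∀ i, 0 < η i) (hc : 0 < c)
    (hcη : ∀ i, c ≤ 1 - η i * ‖A i‖ ^ 2) (lam : ∀ i, Y i) (n : ℕ) :
    avg p hp n (fun ω => ‖(orbit A η 0 lam ω n).point‖ ^ 2) ≤
      p * (‖adjointSum A lam‖ ^ 2 + c * ∑ i, (η i)⁻¹ * ‖lam i‖ ^ 2) / (c * ((n : ℝ) + 1)) := by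
  have : Nonempty (Fin p) := ⟨⟨0, hp⟩⟩
  have hp' : (0 : ℝ) < p := by exact_mod_cast hp
  set V : ℕ → HeavyBallState X Y → ℝ := fun n s =>
    primalEnergy A η 0 n s + c * dualEnergy η n s with hV
  have hdecay : avg p hp (n + 1) (fun ω => V (n + 1) (orbit A η 0 lam ω (n + 1))) ≤
      V 0 (init A lam) := by
    simpa only [mul_zero, add_zero] using avg_randomOrbit_le_of_expect_le hp _ _ V 0
      (fun n ω => (expect_energy_step_le_of_exact (adjointSum_dual_orbit A η 0 lam ω n)
        hη hc.le hcη).trans_eq (add_zero _).symm) (n + 1)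
  have hinit : V 0 (init A lam) =
      ‖adjointSum A lam‖ ^ 2 + c * ∑ i, (η i)⁻¹ * ‖lam i‖ ^ 2 := by
    simp [hV, primalEnergy, dualEnergy, init]
  have hlower (s : HeavyBallState X Y) :
      c * ((n + 1) / p) * ‖s.prev‖ ^ 2 ≤ V (n + 1) s := by
    have hprimal :=
      sq_norm_adjointSum_dual_le_primalEnergy (A := A) 0 (fun i => (hη i).le) (n + 1) s
    have hdual := mul_le_mul_of_nonneg_left
      (sq_norm_prev_le_dualEnergy (fun i => (hη i).le) (n + 1) s) hc.le
    rw [Fintype.card_fin, Nat.cast_succ] at hdual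
    linarith [sq_nonneg ‖adjointSum A s.dual‖]
  have hbound : c * ((n + 1) / p) * avg p hp n (fun ω => ‖(orbit A η 0 lam ω n).point‖ ^ 2) ≤
      V 0 (init A lam) := by
    rw [← avg_norm_sq_prev_orbit_succ, ← avg_const_mul]
    exact (avg_mono hp _ fun ω => hlower _).trans hdecay
  rw [hinit, ← mul_div_assoc, div_mul_eq_mul_div, div_le_iff₀ hp'] at hbound
  rw [le_div_iff₀ (by positivity)]
  linarith

lemma avg_norm_sq_adjointSum_dual_le_of_noise (hη : ∀ i, 0 ≤ η i) (hc : 0 < c)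
    (hcη : ∀ i, c ≤ 1 - η i * ‖A i‖ ^ 2) (b : ∀ i, Y i) (n : ℕ) :
    avg p hp n (fun ω => ‖adjointSum A (orbit A η b 0 ω n).dual‖ ^ 2) ≤
      n * ((𝔼 i, η i * ‖b i‖ ^ 2) / c) := by
  have : Nonempty (Fin p) := ⟨⟨0, hp⟩⟩
  have hinit : primalEnergy A η b 0 (init A 0) = 0 := by simp [primalEnergy, init]
  calc avg p hp n (fun ω => ‖adjointSum A (orbit A η b 0 ω n).dual‖ ^ 2)
      ≤ avg p hp n (fun ω => primalEnergy A η b n (orbit A η b 0 ω n)) :=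
        avg_mono hp n fun _ => sq_norm_adjointSum_dual_le_primalEnergy b hη n _
    _ ≤ primalEnergy A η b 0 (init A 0) + n * ((𝔼 i, η i * ‖b i‖ ^ 2) / c) :=
        avg_randomOrbit_le_of_expect_le hp _ _ _ _ (fun n ω =>
          expect_primalEnergy_step_le_of_noise b (adjointSum_dual_orbit A η b 0 ω n) hη hc hcη) n
    _ = n * ((𝔼 i, η i * ‖b i‖ ^ 2) / c) := by rw [hinit, zero_add]

theorem avg_norm_sq_orbit_le_of_noise (hη : ∀ i, 0 ≤ η i) (hc : 0 < c)
    (hcη : ∀ i, c ≤ 1 - η i * ‖A i‖ ^ 2) (b : ∀ i, Y i) (n : ℕ) :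
    avg p hp n (fun ω => ‖(orbit A η b 0 ω n).point‖ ^ 2) ≤
      n * ((𝔼 i, η i * ‖b i‖ ^ 2) / c) := by
  set C := (𝔼 i, η i * ‖b i‖ ^ 2) / c
  have hC0 : 0 ≤ C := div_nonneg
    (expect_nonneg fun i _ => mul_nonneg (hη i) (sq_nonneg _)) hc.le
  have hmean (n : ℕ) : ((n : ℝ) + 1) * avg p hp n (fun ω => ‖(orbit A η b 0 ω n).point‖ ^ 2) ≤
      n * C + n * avg p hp n (fun ω => ‖(orbit A η b 0 ω n).prev‖ ^ 2) := by
    rw [← avg_const_mul, ← avg_const_mul]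
    refine le_trans ?_ (add_le_add_left
      (avg_norm_sq_adjointSum_dual_le_of_noise hp hη hc hcη b n) _)
    rw [← avg_add]
    refine avg_mono hp n fun ω => norm_sq_le_of_add_one_smul_eq n.cast_nonneg ?_
    rw [adjointSum_dual_orbit, sub_add_cancel]
  induction n with
  | zero => simpa using hmean 0
  | succ n ih =>
    have h := hmean (n + 1)
    rw [avg_norm_sq_prev_orbit_succ] at h
    push_cast at h ⊢
    refine le_of_mul_le_mul_left ?_ (by positivity : (0 : ℝ) < n + 1 + 1)
    linarith [mul_le_mul_of_nonneg_left ih (by positivity : (0 : ℝ) ≤ n + 1),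
      mul_nonneg (by positivity : (0 : ℝ) ≤ n + 1) hC0]

theorem avg_norm_sq_heavyBall_sub_le (hη : ∀ i, 0 < η i) (hc : 0 < c)
    (hcη : ∀ i, c ≤ 1 - η i * ‖A i‖ ^ 2) {b lam : ∀ i, Y i} {z : X} {x : (ℕ → Fin p) → ℕ → X}
    (hx : ∀ ω, IsHeavyBall A η b ω (x ω)) (h0 : ∀ ω, x ω 0 - z = adjointSum A lam) (n : ℕ) :
    avg p hp n (fun ω => ‖x ω n - z‖ ^ 2) ≤
      2 * (p * (‖adjointSum A lam‖ ^ 2 + c * ∑ i, (η i)⁻¹ * ‖lam i‖ ^ 2) / (c * ((n : ℝ) + 1))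
        + n * ((𝔼 i, η i * ‖b i - A i z‖ ^ 2) / c)) := by
  simp only [fun ω => (hx ω).sub_eq_point_orbit_add (h0 ω) n]
  refine (avg_norm_add_sq_le hp n _ _).trans ?_
  gcongr
  · exact avg_norm_sq_orbit_le_of_exact hp hη hc hcη lam n
  · exact avg_norm_sq_orbit_le_of_noise hp (fun i => (hη i).le) hc hcη _ n

end Convergence

/-- **Theorem SHB.thm (error estimate with noisy data).**  Assume `0 < η i < 1/‖A i‖²`
and that the `x₀`-minimal norm solution `x†` of `A x = y` satisfies the source
condition `x† − x₀ = A* λ†`.  Then the stochastic heavy-ball iterates with noisy data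
`y^δ` (`‖y^δ i − y i‖ ≤ δ i`, `δ = (∑ δ i²)^{1/2}`) satisfy, for all `n ≥ 0`,
`E[‖x^δ n − x†‖²] ≤ 2 p M₀/(c₀ (n+1)) + 2 η̄ n δ²/(c₀ p)`, where
`η̄ = max_i η i`, `c₀ = min_i (1 − η i ‖A i‖²)`, and
`M₀ = ‖x₀ − x†‖² + c₀ ∑_i (1/η i) ‖λ† i‖²`. -/
theorem stmt_10 {p : ℕ} (hp : 0 < p) {X : Type*} [NormedAddCommGroup X]
    [InnerProductSpace ℝ X] [CompleteSpace X]
    {Y : Fin p → Type*} [∀ i, NormedAddCommGroup (Y i)] [∀ i, InnerProductSpace ℝ (Y i)]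
    [∀ i, CompleteSpace (Y i)]
    (A : ∀ i, X →L[ℝ] Y i) (y yδ : ∀ i, Y i) (δi : Fin p → ℝ) (δ : ℝ)
    (hnoise : ∀ i, ‖yδ i - y i‖ ≤ δi i)
    (hδ : δ = Real.sqrt (∑ i, (δi i) ^ 2))
    (η : Fin p → ℝ) (hη : ∀ i, 0 < η i ∧ η i < 1 / ‖A i‖ ^ 2)
    (ηbar c₀ : ℝ)
    (hηbar : IsGreatest (Set.range η) ηbar)
    (hc₀ : IsLeast (Set.range fun i => 1 - η i * ‖A i‖ ^ 2) c₀)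
    (x₀ xdag : X)
    (hdag : ∀ i, (A i) xdag = y i)
    (hmin : ∀ x' : X, (∀ i, (A i) x' = y i) → ‖xdag - x₀‖ ≤ ‖x' - x₀‖)
    (lamdag : ∀ j, Y j)
    (hsource : xdag - x₀ = ∑ j, (A j).adjoint (lamdag j))
    (M₀ : ℝ) (hM₀ : M₀ = ‖x₀ - xdag‖ ^ 2 + c₀ * ∑ i, (η i)⁻¹ * ‖lamdag i‖ ^ 2)
    (xδ : (ℕ → Fin p) → ℕ → X)
    (hxδ0 : ∀ ω, xδ ω 0 = x₀)
    (hxδ : ∀ ω, ∀ n : ℕ, xδ ω (n + 1) = xδ ω n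
      - (((n : ℝ) + 2)⁻¹ * η (ω n)) • ((A (ω n)).adjoint ((A (ω n)) (xδ ω n) - yδ (ω n)))
      + ((n : ℝ) / ((n : ℝ) + 2)) • (xδ ω n - xδ ω (n - 1))) :
    ∀ n : ℕ,
      avg p hp n (fun ω => ‖xδ ω n - xdag‖ ^ 2)
        ≤ 2 * p * M₀ / (c₀ * ((n : ℝ) + 1)) + 2 * ηbar * n * δ ^ 2 / (c₀ * p) := by
  intro n
  have hη0 (i : Fin p) : 0 < η i := (hη i).1
  have hc : 0 < c₀ := by
    obtain ⟨i, rfl⟩ := hc₀.1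
    exact one_sub_mul_sq_pos (hη0 i) (hη i).2
  have hcη (i : Fin p) : c₀ ≤ 1 - η i * ‖A i‖ ^ 2 := hc₀.2 ⟨i, rfl⟩
  have hstart : x₀ - xdag = adjointSum A (-lamdag) := by
    rw [map_neg, adjointSum_apply, ← hsource, neg_sub]
  have hbound := avg_norm_sq_heavyBall_sub_le hp hη0 hc hcη hxδ
    (fun ω => (congrArg (· - xdag) (hxδ0 ω)).trans hstart) n
  simp only [← hstart, Pi.neg_apply, norm_neg, ← hM₀, hdag] at hbound
  have hdata := expect_mul_sq_le (fun i => (hη0 i).le) (fun i => hηbar.2 ⟨i, rfl⟩)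
    (fun i => norm_nonneg (yδ i - y i)) hnoise
  rw [← Real.sq_sqrt (Finset.sum_nonneg fun i _ => sq_nonneg (δi i)), ← hδ,
    Fintype.card_fin] at hdata
  calc _ ≤ 2 * (p * M₀ / (c₀ * ((n : ℝ) + 1)) + n * (ηbar * δ ^ 2 / p / c₀)) := by
        refine hbound.trans ?_
        gcongr
    _ = _ := by ring
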